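/- arXiv:2310.13502 — 3 statements merged into one kernel-verified Lean document; each statement's English description precedes it below -/
import Mathlib

section
/- (Magic of potions, main part.) Let f = {a_i}_{i∈I} and g = {b_j}_{j∈J} be families of homogeneous elements of an M-graded commutative ring A, with f relevant and closed under homogeneous divisors (f = f̲). Let S and T be the multiplicative submonoids generated by f and by f ∪ g, and let χ : A_{(f)} → A_{(f∪g)} be the canonical ring homomorphism between potions (characterized by val ∘ χ = (canonical map Localization S → Localization T) ∘ val). For each j ∈ J fix n_j > 0 and finitely supported ν_j⁺, ν_j⁻ : I → ℕ such that b_j^{n_j} · ∏_i a_i^{ν_j⁻(i)} and ∏_i a_i^{ν_j⁺(i)} have the same degree, and let z_j ∈ A_{(f)} be the element with val(z_j) = (b_j^{n_j} · ∏_i a_i^{ν_j⁻(i)}) / (∏_i a_i^{ν_j⁺(i)}). Then χ exhibits A_{(f∪g)} as the localization of A_{(f)} at the multiplicative submonoid generated by {z_j}_{j∈J}; i.e., IsLocalization (Submonoid.closure {z_j : j ∈ J}) A_{(f∪g)} holds via χ. -/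
/-!
Statement 5 (Magic of potions, main part): with `f` relevant and closed under
homogeneous divisors, `χ : A_{(f)} → A_{(f∪g)}` the canonical ring homomorphism, and
`z j ∈ A_{(f)}` the elements with value `(b_j ^ n_j * ∏ᵢ aᵢ ^ ν_j⁻ i) / (∏ᵢ aᵢ ^ ν_j⁺ i)`,
the map `χ` exhibits `A_{(f∪g)}` as the localization of `A_{(f)}` at the
multiplicative submonoid generated by the `z j`.
-/

/-- The set of degrees of homogeneous divisors of members of the family `f`. -/
def divisorDegrees {M A I : Type*} [AddCommGroup M] [CommRing A]
    (𝒜 : M → Submodule ℤ A) (f : I → A) : Set M :=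
  {m | ∃ x : A, x ≠ 0 ∧ x ∈ 𝒜 m ∧ ∃ i, x ∣ f i}

/-- A family `f` of homogeneous elements of an `M`-graded ring is *relevant* if every
`x ∈ M` has a positive multiple lying in the subgroup of `M` generated by the degrees
of the homogeneous divisors of members of `f`. -/
def IsRelevant {M A I : Type*} [AddCommGroup M] [CommRing A]
    (𝒜 : M → Submodule ℤ A) (f : I → A) : Prop :=
  ∀ x : M, ∃ n : ℕ, 0 < n ∧ n • x ∈ AddSubgroup.closure (divisorDegrees 𝒜 f)

/-- A product of powers of members of a family `f` belongs to the multiplicative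
submonoid generated by `f`. -/
theorem prodPow_mem_closure {A I : Type*} [CommRing A] (f : I → A) (θ : I →₀ ℕ) :
    (∏ i ∈ θ.support, f i ^ θ i) ∈ Submonoid.closure (Set.range f) :=
  Submonoid.prod_mem _ fun i _ =>
    Submonoid.pow_mem _ (Submonoid.subset_closure (Set.mem_range_self i)) _

/-- The canonical ring homomorphism between localizations of the same ring at two
nested submonoids `S ≤ T`. -/
noncomputable def locMap {A : Type*} [CommRing A] {S T : Submonoid A} (h : S ≤ T) :
    Localization S →+* Localization T :=
  IsLocalization.map (Localization T) (RingHom.id A)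
    (show S ≤ Submonoid.comap (RingHom.id A) T from h)

theorem locMap_mk_aux {A : Type*} [CommRing A] {S T : Submonoid A} (h : S ≤ T) (a : A) (s : S) :
    locMap h (Localization.mk a s) = Localization.mk a ⟨s.1, h s.2⟩ := by
  simp only [locMap, Localization.mk_eq_mk']
  rw [IsLocalization.map_mk']
  rfl

theorem prodPow_mem_graded {M A I : Type*} [AddCommGroup M] [DecidableEq M] [CommRing A]
    (𝒜 : M → Submodule ℤ A) [GradedRing 𝒜] (f : I → A) (d : I → M)
    (hfd : ∀ i, f i ∈ 𝒜 (d i)) (θ : I →₀ ℕ) :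
    (∏ i ∈ θ.support, f i ^ θ i) ∈ 𝒜 (θ.sum fun i c => c • d i) :=
  SetLike.prod_mem_graded _ _ _ fun i _ => SetLike.pow_mem_graded _ (hfd i)

theorem magic_key {M A I J : Type*} [AddCommGroup M] [DecidableEq M] [CommRing A]
    (𝒜 : M → Submodule ℤ A) [GradedRing 𝒜]
    (f : I → A) (d : I → M) (g : J → A) (e : J → M)
    (hfd : ∀ i, f i ∈ 𝒜 (d i)) (hge : ∀ j, g j ∈ 𝒜 (e j))
    (n : J → ℕ) (hn : ∀ j, 0 < n j) (νp νm : J → I →₀ ℕ)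
    (hdeg : ∀ j, n j • e j + ((νm j).sum fun i c => c • d i)
      = (νp j).sum fun i c => c • d i)
    (z : J → HomogeneousLocalization 𝒜 (Submonoid.closure (Set.range f)))
    (hz : ∀ j, (z j).val =
      Localization.mk (g j ^ n j * ∏ i ∈ (νm j).support, f i ^ (νm j) i)
        ⟨∏ i ∈ (νp j).support, f i ^ (νp j) i, prodPow_mem_closure f (νp j)⟩)
    (t : A) (ht : t ∈ Submonoid.closure (Set.range f ∪ Set.range g)) :
    ∃ δ κ : M, ∃ q : A, ∃ s : Submonoid.closure (Set.range f),
      ∃ u ∈ Submonoid.closure (Set.range z),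
      t ∈ 𝒜 δ ∧ q ∈ 𝒜 κ ∧ (s : A) ∈ 𝒜 (δ + κ) ∧ u.val = Localization.mk (t * q) s := by
  induction ht using Submonoid.closure_induction with
  | mem x hx =>
    rcases hx with ⟨i, rfl⟩ | ⟨j, rfl⟩
    · refine ⟨d i, 0, 1, ⟨f i, Submonoid.subset_closure ⟨i, rfl⟩⟩, 1, one_mem _, hfd i,
        SetLike.one_mem_graded 𝒜, by simpa using hfd i, ?_⟩
      rw [HomogeneousLocalization.val_one, mul_one]
      exact (Localization.mk_self (⟨f i, Submonoid.subset_closure ⟨i, rfl⟩⟩ :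
        Submonoid.closure (Set.range f))).symm
    · refine ⟨e j, (n j - 1) • e j + (νm j).sum fun i c => c • d i,
        g j ^ (n j - 1) * ∏ i ∈ (νm j).support, f i ^ (νm j) i,
        ⟨_, prodPow_mem_closure f (νp j)⟩, z j, Submonoid.subset_closure ⟨j, rfl⟩, hge j,
        SetLike.mul_mem_graded (SetLike.pow_mem_graded _ (hge j))
          (prodPow_mem_graded 𝒜 f d hfd _), ?_, ?_⟩
      · have : e j + ((n j - 1) • e j + (νm j).sum fun i c => c • d i)
            = (νp j).sum fun i c => c • d i := by
          rw [← hdeg j, ← add_assoc, ← succ_nsmul', Nat.sub_add_cancel (hn j)]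
        rw [this]
        exact prodPow_mem_graded 𝒜 f d hfd _
      · rw [hz j, ← mul_assoc, ← pow_succ', Nat.sub_add_cancel (hn j)]
  | one =>
    refine ⟨0, 0, 1, 1, 1, one_mem _, SetLike.one_mem_graded 𝒜, SetLike.one_mem_graded 𝒜,
      by simpa using SetLike.one_mem_graded 𝒜, ?_⟩
    rw [HomogeneousLocalization.val_one, mul_one, Localization.mk_one]
  | mul x y _ _ hx hy =>
    obtain ⟨δ, κ, q, s, u, hu, h1, h2, h3, h4⟩ := hx
    obtain ⟨δ', κ', q', s', u', hu', h1', h2', h3', h4'⟩ := hy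
    refine ⟨δ + δ', κ + κ', q * q', s * s', u * u', mul_mem hu hu',
      SetLike.mul_mem_graded h1 h1', SetLike.mul_mem_graded h2 h2', ?_, ?_⟩
    · rw [add_add_add_comm]
      exact SetLike.mul_mem_graded h3 h3'
    · rw [HomogeneousLocalization.val_mul, h4, h4', Localization.mk_mul, mul_mul_mul_comm]

theorem magic_of_potions_isLocalization
    {M A I J : Type*} [AddCommGroup M] [DecidableEq M] [CommRing A]
    (𝒜 : M → Submodule ℤ A) [GradedRing 𝒜]
    (f : I → A) (d : I → M) (g : J → A) (e : J → M)
    (hf0 : ∀ i, f i ≠ 0) (hfd : ∀ i, f i ∈ 𝒜 (d i))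
    (hg0 : ∀ j, g j ≠ 0) (hge : ∀ j, g j ∈ 𝒜 (e j))
    (hrel : IsRelevant 𝒜 f)
    (hdivclosed : {x : A | x ≠ 0 ∧ (∃ m, x ∈ 𝒜 m) ∧ ∃ i, x ∣ f i} = Set.range f)
    (χ : HomogeneousLocalization 𝒜 (Submonoid.closure (Set.range f)) →+*
        HomogeneousLocalization 𝒜 (Submonoid.closure (Set.range f ∪ Set.range g)))
    (hχ : ∀ w, (χ w).val =
      locMap (Submonoid.closure_mono Set.subset_union_left) w.val)
    (n : J → ℕ) (hn : ∀ j, 0 < n j) (νp νm : J → I →₀ ℕ)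
    (hdeg : ∀ j, n j • e j + ((νm j).sum fun i c => c • d i)
      = (νp j).sum fun i c => c • d i)
    (z : J → HomogeneousLocalization 𝒜 (Submonoid.closure (Set.range f)))
    (hz : ∀ j, (z j).val =
      Localization.mk (g j ^ n j * ∏ i ∈ (νm j).support, f i ^ (νm j) i)
        ⟨∏ i ∈ (νp j).support, f i ^ (νp j) i, prodPow_mem_closure f (νp j)⟩) :
    letI : Algebra (HomogeneousLocalization 𝒜 (Submonoid.closure (Set.range f)))
        (HomogeneousLocalization 𝒜 (Submonoid.closure (Set.range f ∪ Set.range g))) :=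
      χ.toAlgebra
    IsLocalization (Submonoid.closure (Set.range z))
      (HomogeneousLocalization 𝒜 (Submonoid.closure (Set.range f ∪ Set.range g))) := by
  letI : Algebra (HomogeneousLocalization 𝒜 (Submonoid.closure (Set.range f)))
        (HomogeneousLocalization 𝒜 (Submonoid.closure (Set.range f ∪ Set.range g))) :=
      χ.toAlgebra
  have hST : Submonoid.closure (Set.range f) ≤ Submonoid.closure (Set.range f ∪ Set.range g) :=
    Submonoid.closure_mono Set.subset_union_left
  have key := magic_key 𝒜 f d g e hfd hge n hn νp νm hdeg z hz
  refine (isLocalization_iff _ _).mpr ⟨?_, ?_, ?_⟩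
  · rintro ⟨u, hu⟩
    change IsUnit (χ u)
    induction hu using Submonoid.closure_induction with
    | mem x hx =>
      obtain ⟨j, rfl⟩ := hx
      have hpm := prodPow_mem_graded 𝒜 f d hfd (νm j)
      have hpp := prodPow_mem_graded 𝒜 f d hfd (νp j)
      have hnum : g j ^ n j * ∏ i ∈ (νm j).support, f i ^ (νm j) i ∈
          𝒜 ((νp j).sum fun i c => c • d i) := by
        rw [← hdeg j]
        exact SetLike.mul_mem_graded (SetLike.pow_mem_graded _ (hge j)) hpm
      have hT : g j ^ n j * ∏ i ∈ (νm j).support, f i ^ (νm j) i ∈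
          Submonoid.closure (Set.range f ∪ Set.range g) :=
        mul_mem (pow_mem (Submonoid.subset_closure (Set.mem_union_right _ (Set.mem_range_self j))) _)
          (hST (prodPow_mem_closure f _))
      refine IsUnit.of_mul_eq_one (HomogeneousLocalization.mk
        ⟨_, ⟨_, hpp⟩, ⟨_, hnum⟩, hT⟩) ?_
      apply HomogeneousLocalization.val_injective
      rw [HomogeneousLocalization.val_mul, hχ, hz, locMap_mk_aux,
        HomogeneousLocalization.val_mk, HomogeneousLocalization.val_one, Localization.mk_mul,
        ← Localization.mk_one, Localization.mk_eq_mk_iff, Localization.r_iff_exists]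
      refine ⟨1, ?_⟩
      simp
      ring
    | one => simp
    | mul x y _ _ hx hy => rw [map_mul]; exact hx.mul hy
  · intro w
    obtain ⟨⟨m, ⟨x, hx⟩, ⟨t, htm⟩, ht⟩, rfl⟩ := HomogeneousLocalization.mk_surjective w
    by_cases h0 : t = 0
    · have ht0 : (0 : A) ∈ Submonoid.closure (Set.range f ∪ Set.range g) := by
        rw [← h0]; exact ht
      have := HomogeneousLocalization.subsingleton 𝒜 ht0
      exact ⟨(0, 1), Subsingleton.elim _ _⟩
    obtain ⟨δ, κ, q, s, u, hu, h1, h2, h3, h4⟩ := key t ht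
    obtain rfl : m = δ := DirectSum.degree_eq_of_mem_mem 𝒜 htm h1 h0
    refine ⟨(HomogeneousLocalization.mk ⟨m + κ, ⟨x * q, SetLike.mul_mem_graded hx h2⟩,
      ⟨s, h3⟩, s.2⟩, ⟨u, hu⟩), ?_⟩
    change _ * χ u = χ _
    apply HomogeneousLocalization.val_injective
    rw [HomogeneousLocalization.val_mul, hχ, hχ, h4, HomogeneousLocalization.val_mk,
      HomogeneousLocalization.val_mk, locMap_mk_aux, locMap_mk_aux, Localization.mk_mul,
      Localization.mk_eq_mk_iff, Localization.r_iff_exists]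
    refine ⟨1, ?_⟩
    simp
    ring
  · intro x y hxy
    change χ x = χ y at hxy
    have hw : χ (x - y) = 0 := by rw [map_sub, hxy, sub_self]
    obtain ⟨⟨m, ⟨a, ha⟩, ⟨s', hsm⟩, hs⟩, hxy'⟩ := HomogeneousLocalization.mk_surjective (x - y)
    have hv := congrArg HomogeneousLocalization.val hw
    rw [hχ, ← hxy', HomogeneousLocalization.val_mk, locMap_mk_aux,
      HomogeneousLocalization.val_zero, Localization.mk_eq_mk', IsLocalization.mk'_eq_zero_iff] at hv
    obtain ⟨⟨t, ht⟩, hta⟩ := hv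
    obtain ⟨δ, κ, q, s, u, hu, h1, h2, h3, h4⟩ := key t ht
    refine ⟨⟨u, hu⟩, ?_⟩
    change u * x = u * y
    rw [← sub_eq_zero, ← mul_sub, ← hxy']
    apply HomogeneousLocalization.val_injective
    rw [HomogeneousLocalization.val_mul, h4, HomogeneousLocalization.val_mk, Localization.mk_mul,
      HomogeneousLocalization.val_zero]
    have : t * q * a = 0 := by
      have : t * a = 0 := hta
      linear_combination q * this
    simp only [this]
    exact Localization.mk_zero _
end

section
/- (Kernel description in the magic of potions.) Let f = {a_i}_{i∈I} and g = {b_j}_{j∈J} be families of homogeneous elements of an M-graded commutative ring A, let S and T be the multiplicative submonoids generated by f and by f ∪ g, and let χ : A_{(f)} → A_{(f∪g)} be the canonical ring homomorphism between potions. Let z ∈ A_{(f)} be an element represented by a fraction x / ∏_i a_i^{θ_i} with x homogeneous and θ : I → ℕ finitely supported. Then χ(z) = 0 if and only if there exist finitely supported δ : I → ℕ and γ : J → ℕ such that x · ∏_i a_i^{δ_i} · ∏_j b_j^{γ_j} = 0 in A. -/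
theorem mem_closure_union_exists {A I J : Type*} [CommRing A] (f : I → A) (g : J → A) (t : A)
    (ht : t ∈ Submonoid.closure (Set.range f ∪ Set.range g)) :
    ∃ (δ : I →₀ ℕ) (γ : J →₀ ℕ),
      t = (∏ i ∈ δ.support, f i ^ δ i) * ∏ j ∈ γ.support, g j ^ γ j := by
  classical
  rw [Submonoid.closure_union, Submonoid.mem_sup] at ht
  obtain ⟨y, hy, w, hw, rfl⟩ := ht
  obtain ⟨δ, rfl⟩ := Submonoid.exists_finsupp_of_mem_closure_range f y hy
  obtain ⟨γ, rfl⟩ := Submonoid.exists_finsupp_of_mem_closure_range g w hw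
  exact ⟨δ, γ, rfl⟩

theorem magic_of_potions_kernel
    {M A I J : Type*} [AddCommGroup M] [DecidableEq M] [CommRing A]
    (𝒜 : M → Submodule ℤ A) [GradedRing 𝒜]
    (f : I → A) (d : I → M) (g : J → A)
    (hf0 : ∀ i, f i ≠ 0) (hfd : ∀ i, f i ∈ 𝒜 (d i))
    (hg : ∀ j, g j ≠ 0 ∧ ∃ m, g j ∈ 𝒜 m)
    (χ : HomogeneousLocalization 𝒜 (Submonoid.closure (Set.range f)) →+*
        HomogeneousLocalization 𝒜 (Submonoid.closure (Set.range f ∪ Set.range g)))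
    (hχ : ∀ w, (χ w).val =
      locMap (Submonoid.closure_mono Set.subset_union_left) w.val)
    (z : HomogeneousLocalization 𝒜 (Submonoid.closure (Set.range f)))
    (x : A) (θ : I →₀ ℕ)
    (hx : x ∈ 𝒜 (θ.sum fun i c => c • d i))
    (hzval : z.val = Localization.mk x
      ⟨∏ i ∈ θ.support, f i ^ θ i, prodPow_mem_closure f θ⟩) :
    χ z = 0 ↔ ∃ (δ : I →₀ ℕ) (γ : J →₀ ℕ),
      x * (∏ i ∈ δ.support, f i ^ δ i) * ∏ j ∈ γ.support, g j ^ γ j = 0 := by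
  rw [HomogeneousLocalization.ext_iff_val, hχ, hzval, HomogeneousLocalization.val_zero,
    locMap, Localization.mk_eq_mk', IsLocalization.map_mk', IsLocalization.mk'_eq_zero_iff]
  simp only [RingHom.id_apply]
  constructor
  · rintro ⟨⟨t, ht⟩, h⟩
    obtain ⟨δ, γ, rfl⟩ := mem_closure_union_exists f g t ht
    refine ⟨δ, γ, ?_⟩
    rw [mul_assoc, mul_comm]
    exact h
  · rintro ⟨δ, γ, h⟩
    refine ⟨⟨_, Submonoid.mul_mem _
      (Submonoid.closure_mono Set.subset_union_left (prodPow_mem_closure f δ))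
      (Submonoid.closure_mono Set.subset_union_right (prodPow_mem_closure g γ))⟩, ?_⟩
    rw [mul_comm]
    simpa only [mul_assoc] using h
end

section
/- (Invertibility, chart-level form.) Let A be a commutative ring graded by an abelian group M via 𝒜, let f = {a_i}_{i∈I} be a family of homogeneous elements with a_i of degree d_i, and let S be the multiplicative submonoid generated by f. Let α ∈ M and suppose there exist finitely supported ν⁺, ν⁻ : I → ℕ with α = Σ_i ν⁺_i • d_i − Σ_i ν⁻_i • d_i. Let u ∈ Localization S be the fraction (∏_i a_i^{ν⁺_i}) / (∏_i a_i^{ν⁻_i}). Let D_α ⊆ Localization S be the set of elements expressible as a fraction x / ∏_i a_i^{θ_i} with θ : I → ℕ finitely supported and x homogeneous of degree α + Σ_i θ_i • d_i, and let D_0 be the corresponding set for α = 0 (which is the image of val : HomogeneousLocalization 𝒜 S → Localization S). Then multiplication by u gives a bijection from D_0 onto D_α; in particular D_α = u • D_0 as subsets of Localization S. -/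
open Pointwise

/-- `potionChart 𝒜 f d α` is the set of elements of `Localization S` (where `S` is the
multiplicative submonoid generated by the family `f`, with `f i ∈ 𝒜 (d i)`) that can be
written as a fraction `x / ∏ᵢ (f i) ^ θᵢ` with `x` homogeneous of degree
`α + Σᵢ θᵢ • d i`. For `α = 0` this is the image of
`val : HomogeneousLocalization 𝒜 S → Localization S`. -/
def potionChart {M A I : Type*} [AddCommGroup M] [DecidableEq M] [CommRing A]
    (𝒜 : M → Submodule ℤ A) (f : I → A) (d : I → M) (α : M) :
    Set (Localization (Submonoid.closure (Set.range f))) :=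
  {y | ∃ (x : A) (θ : I →₀ ℕ), x ∈ 𝒜 (α + θ.sum fun i c => c • d i) ∧
    y = Localization.mk x ⟨∏ i ∈ θ.support, f i ^ θ i, prodPow_mem_closure f θ⟩}

theorem potionChart_mul_aux
    {M A I : Type*} [AddCommGroup M] [DecidableEq M] [CommRing A]
    (𝒜 : M → Submodule ℤ A) [GradedRing 𝒜]
    (f : I → A) (d : I → M) (hfd : ∀ i, f i ∈ 𝒜 (d i))
    (β γ : M) (p m : I →₀ ℕ)
    (hγ : γ + (m.sum fun i c => c • d i) = β + p.sum fun i c => c • d i)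
    (y : Localization (Submonoid.closure (Set.range f)))
    (hy : y ∈ potionChart 𝒜 f d β) :
    Localization.mk (∏ i ∈ p.support, f i ^ p i)
      ⟨∏ i ∈ m.support, f i ^ m i, prodPow_mem_closure f m⟩ * y ∈ potionChart 𝒜 f d γ := by
  classical
  obtain ⟨x, θ, hx, rfl⟩ := hy
  refine ⟨(∏ i ∈ p.support, f i ^ p i) * x, m + θ, ?_, ?_⟩
  · have hp : (∏ i ∈ p.support, f i ^ p i) ∈ 𝒜 (p.sum fun i c => c • d i) :=
      SetLike.prod_pow_mem_graded 𝒜 _ _ _ fun i _ => hfd i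
    have h := SetLike.mul_mem_graded hp hx
    have hs : ((m + θ).sum fun i c => c • d i) =
        (m.sum fun i c => c • d i) + θ.sum fun i c => c • d i :=
      Finsupp.sum_add_index' (fun i => zero_smul _ _) (fun i a b => add_smul _ _ _)
    rw [hs, ← add_assoc, hγ]
    convert h using 2
    abel
  · rw [Localization.mk_mul]
    congr 1
    apply Subtype.ext
    have h : ((m + θ).prod fun i c => f i ^ c) =
        (m.prod fun i c => f i ^ c) * θ.prod fun i c => f i ^ c :=
      Finsupp.prod_add_index' (fun i => pow_zero _) (fun i a b => pow_add _ _ _)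
    exact h.symm

theorem twist_chart_invertibility
    {M A I : Type*} [AddCommGroup M] [DecidableEq M] [CommRing A]
    (𝒜 : M → Submodule ℤ A) [GradedRing 𝒜]
    (f : I → A) (d : I → M)
    (hf0 : ∀ i, f i ≠ 0) (hfd : ∀ i, f i ∈ 𝒜 (d i))
    (α : M) (νp νm : I →₀ ℕ)
    (hα : α = (νp.sum fun i c => c • d i) - νm.sum fun i c => c • d i)
    (u : Localization (Submonoid.closure (Set.range f)))
    (hu : u = Localization.mk (∏ i ∈ νp.support, f i ^ νp i)
      ⟨∏ i ∈ νm.support, f i ^ νm i, prodPow_mem_closure f νm⟩) :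
    Set.BijOn (fun y => u * y) (potionChart 𝒜 f d 0) (potionChart 𝒜 f d α) ∧
      potionChart 𝒜 f d α = u • potionChart 𝒜 f d 0 := by
  subst hu
  set u := Localization.mk (∏ i ∈ νp.support, f i ^ νp i)
      (⟨∏ i ∈ νm.support, f i ^ νm i, prodPow_mem_closure f νm⟩ :
        Submonoid.closure (Set.range f)) with hu
  set v := Localization.mk (∏ i ∈ νm.support, f i ^ νm i)
      (⟨∏ i ∈ νp.support, f i ^ νp i, prodPow_mem_closure f νp⟩ :
        Submonoid.closure (Set.range f)) with hv
  have huv : u * v = 1 := by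
    rw [hu, hv, Localization.mk_mul, ← Localization.mk_one, Localization.mk_eq_mk_iff,
      Localization.r_iff_exists]
    exact ⟨1, by simp [mul_comm]⟩
  have h1 : ∀ y ∈ potionChart 𝒜 f d 0, u * y ∈ potionChart 𝒜 f d α := fun y hy =>
    potionChart_mul_aux 𝒜 f d hfd 0 α νp νm (by rw [hα]; abel) y hy
  have h2 : ∀ y ∈ potionChart 𝒜 f d α, v * y ∈ potionChart 𝒜 f d 0 := fun y hy =>
    potionChart_mul_aux 𝒜 f d hfd α 0 νm νp (by rw [hα]; abel) y hy
  have hb : Set.BijOn (fun y => u * y) (potionChart 𝒜 f d 0) (potionChart 𝒜 f d α) := by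
    refine ⟨h1, fun a _ b _ hab => ?_, fun y hy => ⟨v * y, h2 y hy, ?_⟩⟩
    · exact (IsUnit.of_mul_eq_one v huv).mul_left_cancel hab
    · change u * (v * y) = y
      rw [← mul_assoc, huv, one_mul]
  exact ⟨hb, hb.image_eq.symm⟩
end
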